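/- Let f ∈ ℱ, let M be a model of T_{0,f}, let n < ω, let b_0, …, b_n ∈ Q^M, let k* be minimal such that f(k*) > n, and for each i ≤ n let s_i ∈ 𝒮_{f,k*+1} be the unique element with b_i ∈ Q^M_{s_i}. Then the following are equivalent: (i) there exist a model N of T_{0,f}, an embedding ι : M → N, and an element a ∈ P^N such that R^N(ι(b_i), a) holds for all i ≤ n; (ii) there exists ν ∈ 𝒯_{f,k*+1} with ν ∈ s_i for all i ≤ n. -/

import Mathlib

/-- `η ∈ 𝒯_f` : a finite sequence with `η(ℓ) ≤ f(ℓ)` for all `ℓ < lg(η)`. -/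
def inT (f : ℕ → ℕ) (η : List ℕ) : Prop := ∀ i : Fin η.length, η.get i ≤ f i

/-- `𝒯_{f,k}` : elements of `𝒯_f` of length exactly `k`. -/
def Tk (f : ℕ → ℕ) (k : ℕ) : Set (List ℕ) := {η | η.length = k ∧ inT f η}

/-- `𝒯_{f,[k]}` : elements of `𝒯_f` of length at most `k`. -/
def Tle (f : ℕ → ℕ) (k : ℕ) : Set (List ℕ) := {η | η.length ≤ k ∧ inT f η}

/-- `𝒯_f = ⋃_k 𝒯_{f,k}`. -/
def Tf (f : ℕ → ℕ) : Set (List ℕ) := {η | inT f η}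

/-- The conditions on `s ⊆ 𝒯_{f,[k]}` prior to maximality: nonempty, closed
under initial segment, every `⊴`-maximal node is in `𝒯_{f,k}`, and `s`
contains no full splitting `{ρ⌢⟨ℓ⟩ : ℓ ≤ f(lg ρ)}`. -/
def SBase (f : ℕ → ℕ) (k : ℕ) (s : Set (List ℕ)) : Prop :=
  s ⊆ Tle f k ∧ s.Nonempty ∧
  (∀ η ∈ s, ∀ ρ : List ℕ, ρ <+: η → ρ ∈ s) ∧
  (∀ ρ ∈ s, (∀ η ∈ s, ρ <+: η → η = ρ) → ρ.length = k) ∧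
  (∀ ρ ∈ Tle f k, ¬ ∀ ℓ ≤ f ρ.length, ρ ++ [ℓ] ∈ s)

/-- `𝒮_{f,k}` : the `k`-maximal subsets of `𝒯_{f,[k]}`, i.e. those satisfying
`SBase` and maximal under inclusion subject to it. -/
def Sk (f : ℕ → ℕ) (k : ℕ) : Set (Set (List ℕ)) :=
  {s | SBase f k s ∧ ∀ s', SBase f k s' → s ⊆ s' → s' = s}

/-- `𝒮_f = ⋃_{k ≥ 1} 𝒮_{f,k}`. -/
def Sf (f : ℕ → ℕ) : Set (Set (List ℕ)) := {s | ∃ k, 1 ≤ k ∧ s ∈ Sk f k}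

/-- The restriction `η ↾ k = ⟨η 0, …, η (k-1)⟩` of `η : ℕ → ℕ`. -/
def restr (η : ℕ → ℕ) (k : ℕ) : List ℕ := List.map η (List.range k)

/-- `lim(𝒯_f)` : branches of `𝒯_f`. -/
def limT (f : ℕ → ℕ) : Set (ℕ → ℕ) := {η | ∀ k, restr η k ∈ Tk f k}

/-- `lim(𝒮_f)` : sequences `⟨s_k : 1 ≤ k < ω⟩` with `s_k ∈ 𝒮_{f,k}`,
increasing under inclusion (the value at `0` is irrelevant). -/
def limS (f : ℕ → ℕ) : Set (ℕ → Set (List ℕ)) :=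
  {ν | (∀ k, 1 ≤ k → ν k ∈ Sk f k) ∧ ∀ k k', 1 ≤ k → k < k' → ν k ⊆ ν k'}

universe u

/-- An interpretation of the vocabulary
`τ = {P, Q, R, P_η (η ∈ 𝒯_f), Q_s (s ∈ 𝒮_f)}` on a domain `M`.
(The values of `Pn`/`Qs` off `𝒯_f`/`𝒮_f` are irrelevant.) -/
structure T0Str (M : Type u) where
  P : Set M
  Q : Set M
  Pn : List ℕ → Set M
  Qs : Set (List ℕ) → Set M
  R : M → M → Prop

/-- `S` is a model of the universal theory `T_{0,f}` (Definition 2.3). -/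
def IsModelT0 (f : ℕ → ℕ) {M : Type u} (S : T0Str M) : Prop :=
  -- (a) P, Q partition M
  (S.P ∪ S.Q = Set.univ ∧ Disjoint S.P S.Q) ∧
  -- (b) for each k, ⟨P_η : η ∈ 𝒯_{f,k}⟩ partitions P
  (∀ k, (⋃ η ∈ Tk f k, S.Pn η) = S.P ∧
    ∀ η ∈ Tk f k, ∀ η' ∈ Tk f k, η ≠ η' → Disjoint (S.Pn η) (S.Pn η')) ∧
  -- (c) for each k ≥ 1, ⟨Q_s : s ∈ 𝒮_{f,k}⟩ partitions Q
  (∀ k, 1 ≤ k → (⋃ s ∈ Sk f k, S.Qs s) = S.Q ∧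
    ∀ s ∈ Sk f k, ∀ s' ∈ Sk f k, s ≠ s' → Disjoint (S.Qs s) (S.Qs s')) ∧
  -- (d) monotonicity
  (∀ η ∈ Tf f, ∀ η' ∈ Tf f, η <+: η' → S.Pn η' ⊆ S.Pn η) ∧
  (∀ s ∈ Sf f, ∀ s' ∈ Sf f, s ⊆ s' → S.Qs s' ⊆ S.Qs s) ∧
  -- (e) R ⊆ Q × P
  (∀ b a, S.R b a → b ∈ S.Q ∧ a ∈ S.P) ∧
  -- (e) no element of Q connects into every piece of a successor partition
  (∀ k, ∀ η ∈ Tk f k, ∀ bv : ℕ → M,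
    (∀ ℓ ≤ f k, bv ℓ ∈ S.Pn (η ++ [ℓ])) →
      ¬ ∃ x ∈ S.Q, ∀ ℓ ≤ f k, S.R x (bv ℓ)) ∧
  -- (e) edges from Q_s go only into P_η with η ∈ s
  (∀ b a, S.R b a → ∀ k, 1 ≤ k → ∀ s ∈ Sk f k, b ∈ S.Qs s →
    ∀ η ∈ Tk f k, a ∈ S.Pn η → η ∈ s)

/-- An embedding of `τ`-structures: injective and preserving all atomic
formulas in both directions. -/
def IsEmb (f : ℕ → ℕ) {A B : Type u} (SA : T0Str A) (SB : T0Str B)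
    (g : A → B) : Prop :=
  Function.Injective g ∧
  (∀ a, a ∈ SA.P ↔ g a ∈ SB.P) ∧
  (∀ a, a ∈ SA.Q ↔ g a ∈ SB.Q) ∧
  (∀ η ∈ Tf f, ∀ a, a ∈ SA.Pn η ↔ g a ∈ SB.Pn η) ∧
  (∀ s ∈ Sf f, ∀ a, a ∈ SA.Qs s ↔ g a ∈ SB.Qs s) ∧
  (∀ a b, SA.R a b ↔ SB.R (g a) (g b))

/-!
A `k`-maximal set omits exactly one successor of each of its nodes of length `< k`: if it omitted
two successors of `ρ`, a branch through one of them could be added, because above that successor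
the branch does not meet the set and every node has at least two successors. Hence `N` elements of
`Q` that share a node `ρ` exclude at most `N` of the `f |ρ| + 1` successors of `ρ`, so a common node
can be prolonged as long as `N ≤ f |ρ|`. A common node at the critical level thus lies on a common
infinite branch, and a new element of `P` on this branch may be joined to all the given elements of
`Q` at once. Conversely, the node of length `k` realized by an element of `P` belongs to the
`k`-maximal set of each of its neighbours.
-/

section Trees

variable {f : ℕ → ℕ} {η ρ τ : List ℕ} {k ℓ : ℕ}

theorem inT.of_prefix (hη : inT f η) (h : ρ <+: η) : inT f ρ := by
  rintro ⟨i, hi⟩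
  simpa only [List.get_eq_getElem, h.getElem hi] using hη ⟨i, hi.trans_le h.length_le⟩

theorem inT_append_singleton : inT f (η ++ [ℓ]) ↔ inT f η ∧ ℓ ≤ f η.length := by
  refine ⟨fun h => ⟨h.of_prefix (List.prefix_append _ _), ?_⟩, ?_⟩
  · simpa using h ⟨η.length, by simp⟩
  · rintro ⟨hη, hℓ⟩ ⟨i, hi⟩
    have hi' : i ≤ η.length := Nat.lt_succ_iff.1 (by simpa using hi)
    rcases hi'.lt_or_eq with h | rfl
    · simpa [List.getElem_append_left h] using hη ⟨i, h⟩
    · simpa using hℓ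

theorem exists_mem_Tk_prefix (hη : inT f η) (hk : η.length ≤ k) : ∃ τ ∈ Tk f k, η <+: τ := by
  induction k, hk using Nat.le_induction with
  | base => exact ⟨η, ⟨rfl, hη⟩, List.prefix_rfl⟩
  | succ k _ ih =>
    obtain ⟨τ, ⟨hlen, hτ⟩, hητ⟩ := ih
    exact ⟨τ ++ [0], ⟨by simp [hlen], inT_append_singleton.2 ⟨hτ, Nat.zero_le _⟩⟩,
      hητ.trans (List.prefix_append _ _)⟩

theorem exists_append_singleton_prefix (h : ρ <+: τ) (hlen : ρ.length < τ.length) :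
    ∃ ℓ, ρ ++ [ℓ] <+: τ :=
  ⟨_, List.concat_get_prefix h hlen⟩

end Trees

section Branches

variable {β : ℕ → ℕ} {η : List ℕ} {k m : ℕ}

theorem length_restr : (restr β k).length = k := by
  simp [restr]

theorem restr_succ : restr β (k + 1) = restr β k ++ [β k] := by
  simp [restr, List.range_succ]

theorem eq_restr_of_prefix (h : η <+: restr β m) : η = restr β η.length := by
  have hlen : η.length ≤ m := by simpa only [length_restr] using h.length_le
  calc
    η = (restr β m).take η.length := List.prefix_iff_eq_take.1 h
    _ = restr β η.length := by simp [restr, ← List.map_take, List.take_range, hlen]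

theorem exists_forall_restr {p : List ℕ → Prop} (hnil : p [])
    (happend : ∀ ρ, p ρ → ∃ ℓ, p (ρ ++ [ℓ])) : ∃ β, ∀ m, p (restr β m) := by
  choose! next hnext using happend
  let node : ℕ → List ℕ := Nat.rec [] fun _ ρ => ρ ++ [next ρ]
  have hrestr (m : ℕ) : restr (fun j => next (node j)) m = node m := by
    induction m with
    | zero => rfl
    | succ m ih => rw [restr_succ, ih]
  refine ⟨fun j => next (node j), fun m => hrestr m ▸ ?_⟩
  induction m with
  | zero => exact hnil
  | succ m ih => exact hnext _ ih

end Branches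

section MaximalSets

variable {f : ℕ → ℕ} {s : Set (List ℕ)} {η ρ τ : List ℕ} {j k k' ℓ ℓ' : ℕ}

theorem SBase.mem_of_prefix (hs : SBase f k s) (hη : η ∈ s) (h : ρ <+: η) : ρ ∈ s :=
  hs.2.2.1 η hη ρ h

theorem SBase.nil_mem (hs : SBase f k s) : [] ∈ s :=
  let ⟨_, hη⟩ := hs.2.1
  hs.mem_of_prefix hη List.nil_prefix

theorem SBase.exists_append_notMem (hs : SBase f k s) (hρ : ρ ∈ Tle f k) :
    ∃ ℓ ≤ f ρ.length, ρ ++ [ℓ] ∉ s := by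
  simpa only [not_forall, exists_prop] using hs.2.2.2.2 ρ hρ

theorem SBase.exists_append_mem (hs : SBase f k s) (hρ : ρ ∈ s) (hlen : ρ.length < k) :
    ∃ ℓ, ρ ++ [ℓ] ∈ s := by
  by_contra! hnone
  refine hlen.ne (hs.2.2.2.1 ρ hρ fun η hη hρη => ?_)
  by_contra hne
  have hlt : ρ.length < η.length :=
    hρη.length_le.lt_of_ne fun h => hne (hρη.eq_of_length h).symm
  obtain ⟨ℓ, hℓ⟩ := exists_append_singleton_prefix hρη hlt
  exact hnone ℓ (hs.mem_of_prefix hη hℓ)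

theorem SBase.exists_mem_length_eq (hs : SBase f k s) (hj : j ≤ k) : ∃ ρ ∈ s, ρ.length = j := by
  induction j with
  | zero => exact ⟨[], hs.nil_mem, rfl⟩
  | succ j ih =>
    obtain ⟨ρ, hρ, rfl⟩ := ih (Nat.le_of_succ_le hj)
    obtain ⟨ℓ, hℓ⟩ := hs.exists_append_mem hρ hj
    exact ⟨ρ ++ [ℓ], hℓ, by simp⟩

theorem SBase.pos (hs : SBase f k s) (hj : j < k) : 0 < f j := by
  obtain ⟨ρ, hρ, rfl⟩ := hs.exists_mem_length_eq hj.le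
  obtain ⟨ℓ, hℓ⟩ := hs.exists_append_mem hρ hj
  obtain ⟨ℓ', hℓ', hnot⟩ := hs.exists_append_notMem (hs.1 hρ)
  have hle : ℓ ≤ f ρ.length := (inT_append_singleton.1 (hs.1 hℓ).2).2
  have hne : ℓ ≠ ℓ' := by
    rintro rfl
    exact hnot hℓ
  omega

theorem SBase.inter_Tle (hs : SBase f k' s) (hk : k ≤ k') : SBase f k (s ∩ Tle f k) := by
  refine ⟨Set.inter_subset_right, ⟨[], hs.nil_mem, Nat.zero_le _, (hs.1 hs.nil_mem).2⟩, ?_, ?_, ?_⟩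
  · rintro η ⟨hη, hlen, hT⟩ ρ hρ
    exact ⟨hs.mem_of_prefix hη hρ, hρ.length_le.trans hlen, hT.of_prefix hρ⟩
  · rintro ρ ⟨hρ, hlen, -⟩ hmax
    by_contra hne
    have hlt : ρ.length < k := lt_of_le_of_ne hlen hne
    obtain ⟨ℓ, hℓ⟩ := hs.exists_append_mem hρ (hlt.trans_le hk)
    have hmem : ρ ++ [ℓ] ∈ s ∩ Tle f k := ⟨hℓ, by simpa using hlt, (hs.1 hℓ).2⟩
    simpa using hmax _ hmem (List.prefix_append _ _)
  · rintro ρ ⟨hlen, hT⟩ hall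
    exact hs.2.2.2.2 ρ ⟨hlen.trans hk, hT⟩ fun ℓ hℓ => (hall ℓ hℓ).1

theorem SBase.union_prefixes (hs : SBase f k s) (hτ : τ ∈ Tk f k)
    (hsplit : ∀ σ j, σ ++ [j] <+: τ → σ ++ [j] ∉ s →
      ∃ j' ≤ f σ.length, j' ≠ j ∧ σ ++ [j'] ∉ s) :
    SBase f k (s ∪ {σ | σ <+: τ}) := by
  refine ⟨?_, hs.2.1.inl, ?_, ?_, ?_⟩
  · rintro σ (hσ | hσ)
    · exact hs.1 hσ
    · exact ⟨hτ.1 ▸ hσ.length_le, hτ.2.of_prefix hσ⟩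
  · rintro σ (hσ | hσ) ρ hρ
    · exact Or.inl (hs.mem_of_prefix hσ hρ)
    · exact Or.inr (hρ.trans hσ)
  · rintro σ (hσ | hσ) hmax
    · exact hs.2.2.2.1 σ hσ fun η hη => hmax η (Or.inl hη)
    · rw [← hmax τ (Or.inr List.prefix_rfl) hσ]
      exact hτ.1
  · intro σ hσ hall
    obtain ⟨j, hj, hjs⟩ := hs.exists_append_notMem hσ
    have hjτ : σ ++ [j] <+: τ := (hall j hj).resolve_left hjs
    obtain ⟨j', hj', hne, hj's⟩ := hsplit σ j hjτ hjs
    have hj'τ : σ ++ [j'] <+: τ := (hall j' hj').resolve_left hj's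
    have heq : σ ++ [j'] = σ ++ [j] :=
      (List.prefix_of_prefix_length_le hj'τ hjτ (by simp)).eq_of_length (by simp)
    exact hne (by simpa using heq)

theorem append_mem_of_append_notMem (hs : s ∈ Sk f k) (hρ : ρ ∈ s) (hlen : ρ.length < k)
    (hℓ : ℓ ≤ f ρ.length) (hnot : ρ ++ [ℓ] ∉ s) (hℓ' : ℓ' ≤ f ρ.length) (hne : ℓ' ≠ ℓ) :
    ρ ++ [ℓ'] ∈ s := by
  by_contra hnot'
  have hbase : SBase f k s := hs.1
  obtain ⟨τ, hτ, hρτ⟩ : ∃ τ ∈ Tk f k, ρ ++ [ℓ] <+: τ :=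
    exists_mem_Tk_prefix (inT_append_singleton.2 ⟨(hbase.1 hρ).2, hℓ⟩) (by simpa using hlen)
  suffices SBase f k (s ∪ {σ | σ <+: τ}) from
    hnot (hs.2 _ this Set.subset_union_left ▸ Or.inr hρτ)
  refine hbase.union_prefixes hτ fun σ j hσ hj => ?_
  rcases lt_trichotomy σ.length ρ.length with hlt | heq | hgt
  · have hσρ : σ ++ [j] <+: ρ := List.prefix_of_prefix_length_le hσ
      ((List.prefix_append _ _).trans hρτ) (by simpa using hlt)
    exact absurd (hbase.mem_of_prefix hρ hσρ) hj
  · have hσρ : σ ++ [j] = ρ ++ [ℓ] :=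
      (List.prefix_of_prefix_length_le hσ hρτ (by simp [heq])).eq_of_length (by simp [heq])
    obtain ⟨rfl, hjℓ⟩ := List.append_inj hσρ heq
    obtain rfl : j = ℓ := by simpa using hjℓ
    exact ⟨ℓ', hℓ', hne, hnot'⟩
  · have hρσ : ρ ++ [ℓ] <+: σ := List.prefix_of_prefix_length_le hρτ
      ((List.prefix_append _ _).trans hσ) (by simpa using hgt)
    have hσk : σ.length < k := by simpa [hτ.1] using hσ.length_le
    have hpos : 0 < f σ.length := hbase.pos hσk
    obtain ⟨j', hj', hj'ne⟩ : ∃ j' ≤ f σ.length, j' ≠ j := by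
      rcases Nat.eq_zero_or_pos j with rfl | hj0
      · exact ⟨1, hpos, one_ne_zero⟩
      · exact ⟨0, hpos.le, hj0.ne⟩
    exact ⟨j', hj', hj'ne, fun h =>
      hnot (hbase.mem_of_prefix h (hρσ.trans (List.prefix_append _ _)))⟩

theorem inter_Tle_mem_Sk (hs : s ∈ Sk f k') (hk : k ≤ k') : s ∩ Tle f k ∈ Sk f k := by
  refine ⟨hs.1.inter_Tle hk, fun s' hs' hsub => Set.Subset.antisymm (fun σ hσ => ?_) hsub⟩
  refine ⟨?_, hs'.1 hσ⟩
  induction σ using List.reverseRecOn with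
  | nil => exact hs.1.nil_mem
  | append_singleton ρ ℓ ih =>
    have hρ' : ρ ∈ s' := hs'.mem_of_prefix hσ (List.prefix_append _ _)
    have hlen : ρ.length < k := by simpa using (hs'.1 hσ).1
    have hℓ : ℓ ≤ f ρ.length := (inT_append_singleton.1 (hs'.1 hσ).2).2
    obtain ⟨ℓ', hℓ', hnot⟩ := hs'.exists_append_notMem (hs'.1 hρ')
    have hne : ℓ' ≠ ℓ := by
      rintro rfl
      exact hnot hσ
    by_contra hℓs
    have hmem : ρ ++ [ℓ'] ∈ s :=
      append_mem_of_append_notMem hs (ih hρ') (hlen.trans_le hk) hℓ hℓs hℓ' hne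
    exact hnot (hsub ⟨hmem, by simpa using hlen, (hs.1.1 hmem).2⟩)

theorem exists_forall_append_mem {ι : Type*} {I : Finset ι} {s : ι → Set (List ℕ)}
    (hs : ∀ i ∈ I, s i ∈ Sk f k) (hρ : ∀ i ∈ I, ρ ∈ s i) (hlen : ρ.length < k)
    (hI : I.card ≤ f ρ.length) : ∃ ℓ ≤ f ρ.length, ∀ i ∈ I, ρ ++ [ℓ] ∈ s i := by
  by_contra! hnone
  obtain ⟨i₀, -⟩ : ∃ i, i ∈ I ∧ ρ ++ [0] ∉ s i := hnone 0 (Nat.zero_le _)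
  have : Nonempty ι := ⟨i₀⟩
  choose! omitter hmem hnot using hnone
  obtain ⟨ℓ, hℓ, ℓ', hℓ', hne, heq⟩ : ∃ ℓ ∈ Finset.Iic (f ρ.length),
      ∃ ℓ' ∈ Finset.Iic (f ρ.length), ℓ ≠ ℓ' ∧ omitter ℓ = omitter ℓ' :=
    Finset.exists_ne_map_eq_of_card_lt_of_maps_to (t := I)
      (by simpa only [Nat.card_Iic] using Nat.lt_succ_of_le hI)
      (fun ℓ hℓ => hmem ℓ (by simpa using hℓ))
  rw [Finset.mem_Iic] at hℓ hℓ'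
  have hi : omitter ℓ ∈ I := hmem ℓ hℓ
  exact heq ▸ hnot ℓ' hℓ' <| append_mem_of_append_notMem (hs _ hi) (hρ _ hi) hlen
    hℓ (hnot ℓ hℓ) hℓ' hne.symm

end MaximalSets

section CommonBranches

variable {ι : Type*} {f : ℕ → ℕ} {I : Finset ι} {t : ι → ℕ → Set (List ℕ)} {σ ν : List ℕ}

theorem mem_of_mem_limS {u : ℕ → Set (List ℕ)} (hu : u ∈ limS f) {k k' : ℕ} (hk : 1 ≤ k)
    (hkk' : k ≤ k') (hσ : σ ∈ u k') (hlen : σ.length ≤ k) : σ ∈ u k := by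
  rcases hkk'.eq_or_lt with rfl | hlt
  · exact hσ
  have hmax : u k' ∈ Sk f k' := hu.1 k' (hk.trans hkk')
  have hsub : u k ⊆ u k' ∩ Tle f k := Set.subset_inter (hu.2 k k' hk hlt) (hu.1 k hk).1.1
  rw [← (hu.1 k hk).2 _ (hmax.1.inter_Tle hkk') hsub]
  exact ⟨hσ, hlen, (hmax.1.1 hσ).2⟩

/-- The nodes shared by the sequences `t i ∈ lim(𝒮_f)`, `i ∈ I`. A node `σ` is tested at level
`lg(σ)` only, since the members of such a sequence agree on the nodes they can both contain. -/
def commonNodes (f : ℕ → ℕ) (I : Finset ι) (t : ι → ℕ → Set (List ℕ)) : Set (List ℕ) :=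
  {σ | inT f σ ∧ ∀ i ∈ I, σ ∈ t i σ.length}

theorem exists_append_mem_commonNodes (ht : ∀ i ∈ I, t i ∈ limS f) (hσ : σ ∈ commonNodes f I t)
    (hpos : 1 ≤ σ.length) (hI : I.card ≤ f σ.length) : ∃ ℓ, σ ++ [ℓ] ∈ commonNodes f I t := by
  obtain ⟨ℓ, hℓ, hmem⟩ := exists_forall_append_mem
    (fun i hi => (ht i hi).1 (σ.length + 1) (Nat.le_add_left _ _))
    (fun i hi => (ht i hi).2 _ _ hpos (Nat.lt_succ_self _) (hσ.2 i hi)) (Nat.lt_succ_self _) hI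
  refine ⟨ℓ, inT_append_singleton.2 ⟨hσ.1, hℓ⟩, fun i hi => ?_⟩
  simpa using hmem i hi

theorem exists_mem_limT_forall_restr_mem (ht : ∀ i ∈ I, t i ∈ limS f)
    (hν : ν ∈ commonNodes f I t) (hpos : 1 ≤ ν.length) (hI : ∀ m ≥ ν.length, I.card ≤ f m) :
    ∃ β ∈ limT f, ∀ i ∈ I, ∀ k, 1 ≤ k → restr β k ∈ t i k := by
  obtain ⟨β, hβ⟩ : ∃ β, ∀ m, ∃ σ ∈ commonNodes f I t, ν.length ≤ σ.length ∧ restr β m <+: σ := by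
    refine exists_forall_restr
      (p := fun ρ => ∃ σ ∈ commonNodes f I t, ν.length ≤ σ.length ∧ ρ <+: σ)
      ⟨ν, hν, le_rfl, List.nil_prefix⟩ ?_
    rintro ρ ⟨σ, hσ, hνσ, hρσ⟩
    obtain ⟨j, hj⟩ := exists_append_mem_commonNodes ht hσ (hpos.trans hνσ) (hI _ hνσ)
    obtain ⟨ℓ, hℓ⟩ := exists_append_singleton_prefix (hρσ.trans (List.prefix_append σ [j]))
      (by simpa using Nat.lt_succ_of_le hρσ.length_le)
    exact ⟨ℓ, _, hj, hνσ.trans (by simp), hℓ⟩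
  refine ⟨β, fun k => ?_, fun i hi k hk => ?_⟩ <;> obtain ⟨σ, hσ, hνσ, hβσ⟩ := hβ k
  · exact ⟨length_restr, hσ.1.of_prefix hβσ⟩
  · have hkσ : k ≤ σ.length := by simpa only [length_restr] using hβσ.length_le
    have hmem : restr β k ∈ t i σ.length :=
      ((ht i hi).1 _ (hpos.trans hνσ)).1.mem_of_prefix (hσ.2 i hi) hβσ
    exact mem_of_mem_limS (ht i hi) hk hkσ hmem length_restr.le

end CommonBranches

section Models

variable {f : ℕ → ℕ} {M : Type u} {S : T0Str M} {k : ℕ}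

theorem IsModelT0.mem_P_iff (hS : IsModelT0 f S) (k : ℕ) {a : M} :
    a ∈ S.P ↔ ∃ η ∈ Tk f k, a ∈ S.Pn η := by
  simp only [← (hS.2.1 k).1, Set.mem_iUnion, exists_prop]

theorem IsModelT0.mem_Q_iff (hS : IsModelT0 f S) (hk : 1 ≤ k) {b : M} :
    b ∈ S.Q ↔ ∃ s ∈ Sk f k, b ∈ S.Qs s := by
  simp only [← (hS.2.2.1 k hk).1, Set.mem_iUnion, exists_prop]

theorem IsModelT0.eq_of_mem_Qs (hS : IsModelT0 f S) (hk : 1 ≤ k) {s s' : Set (List ℕ)}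
    (hs : s ∈ Sk f k) (hs' : s' ∈ Sk f k) {b : M} (hb : b ∈ S.Qs s) (hb' : b ∈ S.Qs s') :
    s = s' := by
  by_contra hne
  exact Set.disjoint_left.1 ((hS.2.2.1 k hk).2 s hs s' hs' hne) hb hb'

theorem IsModelT0.mem_of_R (hS : IsModelT0 f S) {a b : M} (hR : S.R b a) (hk : 1 ≤ k)
    {s : Set (List ℕ)} (hs : s ∈ Sk f k) (hb : b ∈ S.Qs s) {η : List ℕ} (hη : η ∈ Tk f k)
    (ha : a ∈ S.Pn η) : η ∈ s :=
  hS.2.2.2.2.2.2.2 b a hR k hk s hs hb η hη ha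

theorem IsModelT0.exists_mem_limS (hS : IsModelT0 f S) {b : M} (hb : b ∈ S.Q) :
    ∃ t ∈ limS f, ∀ k, 1 ≤ k → b ∈ S.Qs (t k) := by
  choose! t ht hbt using fun k (hk : 1 ≤ k) => (hS.mem_Q_iff hk).1 hb
  refine ⟨t, ⟨ht, fun k k' hk hkk' => ?_⟩, hbt⟩
  have hk' : 1 ≤ k' := hk.trans hkk'.le
  have hinter : t k' ∩ Tle f k ∈ Sk f k := inter_Tle_mem_Sk (ht k' hk') hkk'.le
  have hmem : b ∈ S.Qs (t k' ∩ Tle f k) :=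
    hS.2.2.2.2.1 _ ⟨k, hk, hinter⟩ _ ⟨k', hk', ht k' hk'⟩ Set.inter_subset_left (hbt k' hk')
  rw [hS.eq_of_mem_Qs hk (ht k hk) hinter (hbt k hk) hmem]
  exact Set.inter_subset_left

theorem not_forall_R_of_mem_Pn_append (hQ : ⋃ s ∈ Sk f (k + 1), S.Qs s = S.Q)
    (hR : ∀ b a, S.R b a → ∀ s ∈ Sk f (k + 1), b ∈ S.Qs s →
      ∀ η ∈ Tk f (k + 1), a ∈ S.Pn η → η ∈ s)
    {η : List ℕ} (hη : η ∈ Tk f k) {a : ℕ → M} (ha : ∀ ℓ ≤ f k, a ℓ ∈ S.Pn (η ++ [ℓ]))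
    {b : M} (hb : b ∈ S.Q) : ¬ ∀ ℓ ≤ f k, S.R b (a ℓ) := by
  obtain ⟨rfl, hT⟩ := hη
  intro hall
  simp only [← hQ, Set.mem_iUnion, exists_prop] at hb
  obtain ⟨s, hs, hbs⟩ := hb
  obtain ⟨ℓ, hℓ, hnot⟩ := hs.1.exists_append_notMem ⟨Nat.le_succ _, hT⟩
  have hsucc : η ++ [ℓ] ∈ Tk f (η.length + 1) := ⟨by simp, inT_append_singleton.2 ⟨hT, hℓ⟩⟩
  exact hnot (hR b (a ℓ) (hall ℓ hℓ) s hs hbs _ hsucc (ha ℓ hℓ))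

end Models

namespace T0Str

variable {f : ℕ → ℕ} {M : Type u} {S : T0Str M} {β : ℕ → ℕ} {A : Set M}

/-- The one-point extension of `S` by a new element `none` of `P` that realizes the branch `β` and
whose `R`-neighbours are the elements of `A`. -/
def addPoint (S : T0Str M) (β : ℕ → ℕ) (A : Set M) : T0Str (Option M) where
  P := {x | x.elim True (· ∈ S.P)}
  Q := {x | x.elim False (· ∈ S.Q)}
  Pn η := {x | x.elim (η = restr β η.length) (· ∈ S.Pn η)}
  Qs s := {x | x.elim False (· ∈ S.Qs s)}
  R x y := x.elim False fun b => y.elim (b ∈ A) (S.R b)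

theorem isEmb_some_addPoint : IsEmb f S (S.addPoint β A) some :=
  ⟨Option.some_injective _, fun _ => Iff.rfl, fun _ => Iff.rfl, fun _ _ _ => Iff.rfl,
    fun _ _ _ => Iff.rfl, fun _ _ => Iff.rfl⟩

theorem iUnion_Pn_addPoint (hS : IsModelT0 f S) (hβ : β ∈ limT f) (k : ℕ) :
    ⋃ η ∈ Tk f k, (S.addPoint β A).Pn η = (S.addPoint β A).P := by
  ext (_ | a)
  · exact iff_of_true
      (Set.mem_iUnion₂.2 ⟨restr β k, hβ k, congrArg (restr β) length_restr.symm⟩) trivial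
  · simp only [Set.mem_iUnion, exists_prop]
    exact (hS.mem_P_iff k).symm

theorem iUnion_Qs_addPoint (hS : IsModelT0 f S) {k : ℕ} (hk : 1 ≤ k) :
    ⋃ s ∈ Sk f k, (S.addPoint β A).Qs s = (S.addPoint β A).Q := by
  ext (_ | b)
  · simp [addPoint]
  · simp only [Set.mem_iUnion, exists_prop]
    exact (hS.mem_Q_iff hk).symm

theorem disjoint_Pn_addPoint (hS : IsModelT0 f S) {k : ℕ} {η η' : List ℕ} (hη : η ∈ Tk f k)
    (hη' : η' ∈ Tk f k) (hne : η ≠ η') :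
    Disjoint ((S.addPoint β A).Pn η) ((S.addPoint β A).Pn η') := by
  rw [Set.disjoint_left]
  rintro (_ | x) hx hx'
  · exact hne (hx.trans ((hη.1.trans hη'.1.symm) ▸ hx'.symm))
  · exact Set.disjoint_left.1 ((hS.2.1 k).2 η hη η' hη' hne) hx hx'

theorem disjoint_Qs_addPoint (hS : IsModelT0 f S) {k : ℕ} (hk : 1 ≤ k) {s s' : Set (List ℕ)}
    (hs : s ∈ Sk f k) (hs' : s' ∈ Sk f k) (hne : s ≠ s') :
    Disjoint ((S.addPoint β A).Qs s) ((S.addPoint β A).Qs s') := by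
  rw [Set.disjoint_left]
  rintro (_ | x) hx hx'
  · exact hx
  · exact hne (hS.eq_of_mem_Qs hk hs hs' hx hx')

theorem mem_of_R_addPoint (hS : IsModelT0 f S)
    (hA : ∀ b ∈ A, ∀ k, 1 ≤ k → ∀ s ∈ Sk f k, b ∈ S.Qs s → restr β k ∈ s) {a b : Option M}
    (hba : (S.addPoint β A).R b a) {k : ℕ} (hk : 1 ≤ k) {s : Set (List ℕ)} (hs : s ∈ Sk f k)
    (hb : b ∈ (S.addPoint β A).Qs s) {η : List ℕ} (hη : η ∈ Tk f k)
    (ha : a ∈ (S.addPoint β A).Pn η) : η ∈ s := by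
  rcases b with _ | b
  · exact hba.elim
  rcases a with _ | a
  · obtain ⟨rfl, -⟩ := hη
    exact ha ▸ hA b hba _ hk s hs hb
  · exact hS.mem_of_R hba hk hs hb hη ha

theorem isModelT0_addPoint (hS : IsModelT0 f S) (hβ : β ∈ limT f) (hAQ : A ⊆ S.Q)
    (hA : ∀ b ∈ A, ∀ k, 1 ≤ k → ∀ s ∈ Sk f k, b ∈ S.Qs s → restr β k ∈ s) :
    IsModelT0 f (S.addPoint β A) := by
  have ⟨⟨hcover, hdisj⟩, _, _, hPmono, hQmono, hRQP, _⟩ := hS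
  refine ⟨⟨?cover, ?disjoint⟩,
    fun k => ⟨iUnion_Pn_addPoint hS hβ k, fun _ hη _ hη' => disjoint_Pn_addPoint hS hη hη'⟩,
    fun k hk => ⟨iUnion_Qs_addPoint hS hk, fun _ hs _ hs' => disjoint_Qs_addPoint hS hk hs hs'⟩,
    ?Pn_mono, ?Qs_mono, ?R_subset, ?not_full,
    fun _ _ hba _ hk _ hs hb _ hη ha => mem_of_R_addPoint hS hA hba hk hs hb hη ha⟩
  case cover =>
    refine Set.eq_univ_of_forall fun x => ?_
    rcases x with _ | x
    · exact Or.inl trivial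
    · exact Set.eq_univ_iff_forall.1 hcover x
  case disjoint =>
    rw [Set.disjoint_left]
    rintro (_ | x) hx hx'
    · exact hx'
    · exact Set.disjoint_left.1 hdisj hx hx'
  case Pn_mono =>
    rintro η hη η' hη' hpre (_ | x) hx
    · exact eq_restr_of_prefix (hx ▸ hpre)
    · exact hPmono η hη η' hη' hpre hx
  case Qs_mono =>
    rintro s hs s' hs' hsub (_ | x) hx
    · exact hx
    · exact hQmono s hs s' hs' hsub hx
  case R_subset =>
    rintro (_ | b) (_ | a) hba
    · exact hba.elim
    · exact hba.elim
    · exact ⟨hAQ hba, trivial⟩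
    · exact hRQP b a hba
  case not_full =>
    rintro k η hη a ha ⟨b, hb, hall⟩
    have hk : 1 ≤ k + 1 := Nat.le_add_left 1 k
    exact not_forall_R_of_mem_Pn_append (iUnion_Qs_addPoint hS hk)
      (fun _ _ hba _ hs hb _ hη ha => mem_of_R_addPoint hS hA hba hk hs hb hη ha) hη ha hb hall

end T0Str

theorem qe_case_b_general {ι : Type*} {f : ℕ → ℕ} {M : Type u} {SM : T0Str M}
    (hM : IsModelT0 f SM) {I : Finset ι} {b : ι → M} {k : ℕ} (hk : 1 ≤ k)
    (hf : ∀ m ≥ k, I.card ≤ f m) {s : ι → Set (List ℕ)}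
    (hs : ∀ i ∈ I, s i ∈ Sk f k ∧ b i ∈ SM.Qs (s i)) :
    (∃ (N : Type u) (SN : T0Str N) (e : M → N), IsModelT0 f SN ∧ IsEmb f SM SN e ∧
        ∃ a ∈ SN.P, ∀ i ∈ I, SN.R (e (b i)) a) ↔
      ∃ ν ∈ Tk f k, ∀ i ∈ I, ν ∈ s i := by
  constructor
  · rintro ⟨N, SN, e, hN, ⟨-, -, -, -, hQs, -⟩, a, ha, hR⟩
    obtain ⟨ν, hν, haν⟩ := (hN.mem_P_iff k).1 ha
    exact ⟨ν, hν, fun i hi => hN.mem_of_R (hR i hi) hk (hs i hi).1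
      ((hQs (s i) ⟨k, hk, (hs i hi).1⟩ (b i)).1 (hs i hi).2) hν haν⟩
  · rintro ⟨ν, ⟨rfl, hνT⟩, hν⟩
    have hb (i) (hi : i ∈ I) : b i ∈ SM.Q := (hM.mem_Q_iff hk).2 ⟨s i, hs i hi⟩
    choose! t ht hbt using fun i (hi : i ∈ I) => hM.exists_mem_limS (hb i hi)
    have hts (i) (hi : i ∈ I) : t i ν.length = s i :=
      hM.eq_of_mem_Qs hk ((ht i hi).1 _ hk) (hs i hi).1 (hbt i hi _ hk) (hs i hi).2
    obtain ⟨β, hβ, hβt⟩ := exists_mem_limT_forall_restr_mem ht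
      ⟨hνT, fun i hi => (hts i hi).symm ▸ hν i hi⟩ hk hf
    refine ⟨Option M, SM.addPoint β (b '' I), some, T0Str.isModelT0_addPoint hM hβ ?_ ?_,
      T0Str.isEmb_some_addPoint, none, trivial, fun i hi => Set.mem_image_of_mem b hi⟩
    · exact Set.image_subset_iff.2 hb
    · rintro _ ⟨i, hi, rfl⟩ k hk u hu hbu
      rw [hM.eq_of_mem_Qs hk hu ((ht i hi).1 k hk) hbu (hbt i hi k hk)]
      exact hβt i hi k hk

/-- **Case (b) of quantifier elimination (Claim 2.5)**, as a one-point
extension criterion.  Let `M ⊨ T_{0,f}`, `b_0, …, b_n ∈ Q^M`, `k*` minimal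
with `f(k*) > n`, and for each `i ≤ n` let `s_i ∈ 𝒮_{f,k*+1}` be (the unique
element) with `b_i ∈ Q^M_{s_i}`.  Then the following are equivalent:
(i) in some extension `N ⊨ T_{0,f}` of `M` there is `a ∈ P^N` with
`R^N(b_i, a)` for all `i ≤ n`;
(ii) there is `ν ∈ 𝒯_{f,k*+1}` with `ν ∈ s_i` for all `i ≤ n`. -/
theorem qe_case_b
    (f : ℕ → ℕ) (hf : StrictMono f) (hf0 : ∀ k, 0 < f k)
    (M : Type u) (SM : T0Str M) (hM : IsModelT0 f SM)
    (n : ℕ) (b : ℕ → M) (hb : ∀ i ≤ n, b i ∈ SM.Q)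
    (kstar : ℕ) (hk1 : n < f kstar) (hk2 : ∀ j < kstar, f j ≤ n)
    (s : ℕ → Set (List ℕ))
    (hs : ∀ i ≤ n, s i ∈ Sk f (kstar + 1) ∧ b i ∈ SM.Qs (s i)) :
    (∃ (N : Type u) (SN : T0Str N) (ι : M → N),
        IsModelT0 f SN ∧ IsEmb f SM SN ι ∧
        ∃ a ∈ SN.P, ∀ i ≤ n, SN.R (ι (b i)) a) ↔
    (∃ ν ∈ Tk f (kstar + 1), ∀ i ≤ n, ν ∈ s i) := by
  simpa only [Finset.mem_Iic] using qe_case_b_general hM (I := Finset.Iic n) (Nat.le_add_left 1 _)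
    (fun m hm => Nat.card_Iic n ▸ hk1.trans_le (hf.monotone ((Nat.le_succ _).trans hm)))
    (by simpa only [Finset.mem_Iic] using hs)
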